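/- For all positive modal formulas φ and ψ, the sequent φ ⊢ ψ is provable in PGL⁺ if and only if v(φ) ≤ v(ψ) for every GLD-lattice A and every valuation v on A. -/

import Mathlib

/-!
Soundness is an induction on derivations: every axiom and rule of `PGL` is an inequality or a
closure property that holds in a GLD-lattice. The two `ω`-rules are exactly the least upper bound
and greatest lower bound conditions, once `□ⁿ⊥` and `◇ⁿ⊤` are evaluated to the iterates of
the lattice operations (`PosForm.eval_box_iterate`, `PosForm.eval_dia_iterate`).

Completeness uses the Lindenbaum algebra `Lindenbaum`, the formulas modulo interderivability,
ordered by derivability. The rules make it a GLD-lattice (`Lindenbaum.isGLDLattice`), and each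
formula evaluates to its own class under the canonical valuation (`Lindenbaum.eval_mk`), so an
inequality there is a derivation.
-/

/-- Positive modal formulas, built from propositional variables and `⊥`, `⊤`
by `∨`, `∧`, `◇`, `□`. -/
inductive PosForm : Type
  | var : ℕ → PosForm
  | bot : PosForm
  | top : PosForm
  | or : PosForm → PosForm → PosForm
  | and : PosForm → PosForm → PosForm
  | dia : PosForm → PosForm
  | box : PosForm → PosForm

/-- The value of a positive modal formula in a bounded lattice equipped with
operations `box` and `dia`, under a valuation `v` of the variables. -/
def PosForm.eval {A : Type*} [Lattice A] [BoundedOrder A]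
    (box dia : A → A) (v : ℕ → A) : PosForm → A
  | .var p => v p
  | .bot => ⊥
  | .top => ⊤
  | .or φ ψ => PosForm.eval box dia v φ ⊔ PosForm.eval box dia v ψ
  | .and φ ψ => PosForm.eval box dia v φ ⊓ PosForm.eval box dia v ψ
  | .dia φ => dia (PosForm.eval box dia v φ)
  | .box φ => box (PosForm.eval box dia v φ)

/-- A GLD-lattice structure on a bounded distributive lattice `A`, given by the
modal operations `box` and `dia`. -/
structure IsGLDLattice {A : Type*} [DistribLattice A] [BoundedOrder A]
    (box dia : A → A) : Prop where
  box_top : box ⊤ = ⊤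
  dia_bot : dia ⊥ = ⊥
  box_sup_le : ∀ x y : A, box (x ⊔ y) ≤ box x ⊔ dia y
  inf_dia_le : ∀ x y : A, box x ⊓ dia y ≤ dia (x ⊓ y)
  dia_sup : ∀ x y : A, dia (x ⊔ y) = dia x ⊔ dia y
  box_inf : ∀ x y : A, box (x ⊓ y) = box x ⊓ box y
  dia_dia_le : ∀ x : A, dia (dia x) ≤ dia x
  box_le_box_box : ∀ x : A, box x ≤ box (box x)
  isLUB_inf_boxIter : ∀ x : A, IsLUB {y : A | ∃ n : ℕ, y = x ⊓ box^[n] ⊥} x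
  isGLB_sup_diaIter : ∀ x : A, IsGLB {y : A | ∃ n : ℕ, y = x ⊔ dia^[n] ⊤} x

/-- The proof system `PGL⁺` for sequents `φ ⊢ ψ` of positive modal formulas,
including the two `ω`-rules. -/
inductive PGL : PosForm → PosForm → Prop
  | refl (φ : PosForm) : PGL φ φ
  | trans : ∀ {φ ψ χ : PosForm}, PGL φ ψ → PGL ψ χ → PGL φ χ
  | or_inl (φ ψ : PosForm) : PGL φ (.or φ ψ)
  | or_inr (φ ψ : PosForm) : PGL ψ (.or φ ψ)
  | or_elim : ∀ {φ ψ χ : PosForm}, PGL φ χ → PGL ψ χ → PGL (.or φ ψ) χ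
  | and_left (φ ψ : PosForm) : PGL (.and φ ψ) φ
  | and_right (φ ψ : PosForm) : PGL (.and φ ψ) ψ
  | and_intro : ∀ {φ ψ χ : PosForm}, PGL χ φ → PGL χ ψ → PGL χ (.and φ ψ)
  | distrib (φ ψ χ : PosForm) :
      PGL (.and φ (.or ψ χ)) (.or (.and φ ψ) (.and φ χ))
  | dia_mono : ∀ {φ ψ : PosForm}, PGL φ ψ → PGL (.dia φ) (.dia ψ)
  | box_mono : ∀ {φ ψ : PosForm}, PGL φ ψ → PGL (.box φ) (.box ψ)
  | dia_or (φ ψ : PosForm) : PGL (.dia (.or φ ψ)) (.or (.dia φ) (.dia ψ))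
  | box_and (φ ψ : PosForm) : PGL (.and (.box φ) (.box ψ)) (.box (.and φ ψ))
  | dia_box (φ ψ : PosForm) : PGL (.and (.dia φ) (.box ψ)) (.dia (.and φ ψ))
  | box_or (φ ψ : PosForm) : PGL (.box (.or φ ψ)) (.or (.box φ) (.dia ψ))
  | bot_le (φ : PosForm) : PGL .bot φ
  | le_top (φ : PosForm) : PGL φ .top
  | dia_bot : PGL (.dia .bot) .bot
  | box_top : PGL .top (.box .top)
  | dia_dia (φ : PosForm) : PGL (.dia (.dia φ)) (.dia φ)
  | box_box (φ : PosForm) : PGL (.box φ) (.box (.box φ))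
  | gld_box : ∀ {φ ψ : PosForm},
      (∀ n : ℕ, PGL (.and ψ (PosForm.box^[n] .bot)) φ) → PGL ψ φ
  | gld_dia : ∀ {φ ψ : PosForm},
      (∀ n : ℕ, PGL φ (.or ψ (PosForm.dia^[n] .top))) → PGL φ ψ

/-! ### Soundness -/

section Soundness

variable {A : Type*} [DistribLattice A] [BoundedOrder A] {box dia : A → A}

theorem PosForm.eval_box_iterate (v : ℕ → A) (φ : PosForm) (n : ℕ) :
    PosForm.eval box dia v (PosForm.box^[n] φ) = box^[n] (PosForm.eval box dia v φ) :=
  Function.Semiconj.iterate_right (f := PosForm.eval box dia v) (ga := PosForm.box) (gb := box)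
    (fun _ => rfl) n φ

theorem PosForm.eval_dia_iterate (v : ℕ → A) (φ : PosForm) (n : ℕ) :
    PosForm.eval box dia v (PosForm.dia^[n] φ) = dia^[n] (PosForm.eval box dia v φ) :=
  Function.Semiconj.iterate_right (f := PosForm.eval box dia v) (ga := PosForm.dia) (gb := dia)
    (fun _ => rfl) n φ

theorem IsGLDLattice.dia_mono (h : IsGLDLattice box dia) : Monotone dia := fun x y hxy => by
  rw [← sup_eq_right, ← h.dia_sup, sup_eq_right.2 hxy]

theorem IsGLDLattice.box_mono (h : IsGLDLattice box dia) : Monotone box := fun x y hxy => by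
  rw [← inf_eq_left, ← h.box_inf, inf_eq_left.2 hxy]

theorem PGL.sound (h : IsGLDLattice box dia) (v : ℕ → A) {φ ψ : PosForm} (d : PGL φ ψ) :
    PosForm.eval box dia v φ ≤ PosForm.eval box dia v ψ := by
  induction d with
  | refl φ => exact le_rfl
  | trans _ _ h₁ h₂ => exact h₁.trans h₂
  | or_inl φ ψ => exact le_sup_left
  | or_inr φ ψ => exact le_sup_right
  | or_elim _ _ h₁ h₂ => exact sup_le h₁ h₂
  | and_left φ ψ => exact inf_le_left
  | and_right φ ψ => exact inf_le_right
  | and_intro _ _ h₁ h₂ => exact le_inf h₁ h₂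
  | distrib φ ψ χ => exact (inf_sup_left _ _ _).le
  | dia_mono _ h₁ => exact h.dia_mono h₁
  | box_mono _ h₁ => exact h.box_mono h₁
  | dia_or φ ψ => exact (h.dia_sup _ _).le
  | box_and φ ψ => exact (h.box_inf _ _).ge
  | dia_box φ ψ =>
    simp only [PosForm.eval]
    rw [inf_comm, inf_comm (PosForm.eval box dia v φ)]
    exact h.inf_dia_le _ _
  | box_or φ ψ => exact h.box_sup_le _ _
  | bot_le φ => exact _root_.bot_le
  | le_top φ => exact _root_.le_top
  | dia_bot => exact h.dia_bot.le
  | box_top => exact h.box_top.ge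
  | dia_dia φ => exact h.dia_dia_le _
  | box_box φ => exact h.box_le_box_box _
  | gld_box _ ih =>
    refine (h.isLUB_inf_boxIter _).2 ?_
    rintro _ ⟨n, rfl⟩
    simpa only [PosForm.eval, PosForm.eval_box_iterate] using ih n
  | gld_dia _ ih =>
    refine (h.isGLB_sup_diaIter _).2 ?_
    rintro _ ⟨n, rfl⟩
    simpa only [PosForm.eval, PosForm.eval_dia_iterate] using ih n

end Soundness

/-! ### The Lindenbaum algebra -/

/-- Interderivability of formulas in `PGL`. -/
def PGL.setoid : Setoid PosForm where
  r φ ψ := PGL φ ψ ∧ PGL ψ φ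
  iseqv :=
    { refl := fun φ => ⟨.refl φ, .refl φ⟩
      symm := fun h => ⟨h.2, h.1⟩
      trans := fun h k => ⟨h.1.trans k.1, k.2.trans h.2⟩ }

theorem PGL.and_congr {φ φ' ψ ψ' : PosForm} (h : PGL φ φ') (k : PGL ψ ψ') :
    PGL (.and φ ψ) (.and φ' ψ') :=
  .and_intro (.trans (.and_left _ _) h) (.trans (.and_right _ _) k)

theorem PGL.or_congr {φ φ' ψ ψ' : PosForm} (h : PGL φ φ') (k : PGL ψ ψ') :
    PGL (.or φ ψ) (.or φ' ψ') :=
  .or_elim (.trans h (.or_inl _ _)) (.trans k (.or_inr _ _))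

/-- The Lindenbaum algebra of `PGL`: formulas modulo interderivability. -/
def Lindenbaum : Type := Quotient PGL.setoid

namespace Lindenbaum

/-- The class of a formula in the Lindenbaum algebra. -/
def mk (φ : PosForm) : Lindenbaum := Quotient.mk PGL.setoid φ

theorem mk_surjective : Function.Surjective mk := Quotient.mk_surjective

/-- The order on classes is derivability of representatives. -/
instance : PartialOrder Lindenbaum where
  le := Quotient.lift₂ PGL fun _ _ _ _ h k => propext
    ⟨fun d => h.2.trans (d.trans k.1), fun d => h.1.trans (d.trans k.2)⟩
  le_refl := by rintro ⟨φ⟩; exact PGL.refl φ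
  le_trans := by rintro ⟨φ⟩ ⟨ψ⟩ ⟨χ⟩ h k; exact PGL.trans h k
  le_antisymm := by rintro ⟨φ⟩ ⟨ψ⟩ h k; exact Quotient.sound ⟨h, k⟩

theorem mk_le_mk {φ ψ : PosForm} : mk φ ≤ mk ψ ↔ PGL φ ψ := Iff.rfl

instance : Lattice Lindenbaum where
  sup := Quotient.map₂ PosForm.or fun _ _ h _ _ k => ⟨h.1.or_congr k.1, h.2.or_congr k.2⟩
  inf := Quotient.map₂ PosForm.and fun _ _ h _ _ k => ⟨h.1.and_congr k.1, h.2.and_congr k.2⟩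
  le_sup_left := by rintro ⟨φ⟩ ⟨ψ⟩; exact PGL.or_inl φ ψ
  le_sup_right := by rintro ⟨φ⟩ ⟨ψ⟩; exact PGL.or_inr φ ψ
  sup_le := by rintro ⟨φ⟩ ⟨ψ⟩ ⟨χ⟩ h k; exact PGL.or_elim h k
  inf_le_left := by rintro ⟨φ⟩ ⟨ψ⟩; exact PGL.and_left φ ψ
  inf_le_right := by rintro ⟨φ⟩ ⟨ψ⟩; exact PGL.and_right φ ψ
  le_inf := by rintro ⟨φ⟩ ⟨ψ⟩ ⟨χ⟩ h k; exact PGL.and_intro h k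

instance : DistribLattice Lindenbaum :=
  DistribLattice.ofInfSupLe (by rintro ⟨φ⟩ ⟨ψ⟩ ⟨χ⟩; exact PGL.distrib φ ψ χ)

instance : BoundedOrder Lindenbaum where
  top := mk .top
  bot := mk .bot
  le_top := by rintro ⟨φ⟩; exact PGL.le_top φ
  bot_le := by rintro ⟨φ⟩; exact PGL.bot_le φ

/-- The operation `□` on classes of formulas. -/
def box : Lindenbaum → Lindenbaum :=
  Quotient.map PosForm.box fun _ _ h => ⟨h.1.box_mono, h.2.box_mono⟩

/-- The operation `◇` on classes of formulas. -/
def dia : Lindenbaum → Lindenbaum :=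
  Quotient.map PosForm.dia fun _ _ h => ⟨h.1.dia_mono, h.2.dia_mono⟩

theorem box_iterate_bot (n : ℕ) : box^[n] ⊥ = mk (PosForm.box^[n] .bot) :=
  (Function.Semiconj.iterate_right (f := mk) (ga := PosForm.box) (gb := box)
    (fun _ => rfl) n .bot).symm

theorem dia_iterate_top (n : ℕ) : dia^[n] ⊤ = mk (PosForm.dia^[n] .top) :=
  (Function.Semiconj.iterate_right (f := mk) (ga := PosForm.dia) (gb := dia)
    (fun _ => rfl) n .top).symm

theorem isGLDLattice : IsGLDLattice box dia where
  box_top := le_antisymm le_top (mk_le_mk.2 .box_top)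
  dia_bot := le_antisymm (mk_le_mk.2 .dia_bot) bot_le
  box_sup_le := by rintro ⟨φ⟩ ⟨ψ⟩; exact PGL.box_or φ ψ
  inf_dia_le := by
    rintro ⟨φ⟩ ⟨ψ⟩
    -- The axiom lists the two conjuncts in the opposite order.
    exact ((PGL.and_intro (.and_right _ _) (.and_left _ _)).trans (PGL.dia_box ψ φ)).trans
      (PGL.dia_mono (.and_intro (.and_right _ _) (.and_left _ _)))
  dia_sup := by
    rintro ⟨φ⟩ ⟨ψ⟩
    exact Quotient.sound ⟨.dia_or φ ψ, .or_elim (.dia_mono (.or_inl _ _)) (.dia_mono (.or_inr _ _))⟩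
  box_inf := by
    rintro ⟨φ⟩ ⟨ψ⟩
    exact Quotient.sound
      ⟨.and_intro (.box_mono (.and_left _ _)) (.box_mono (.and_right _ _)), .box_and φ ψ⟩
  dia_dia_le := by rintro ⟨φ⟩; exact PGL.dia_dia φ
  box_le_box_box := by rintro ⟨φ⟩; exact PGL.box_box φ
  isLUB_inf_boxIter x := by
    refine ⟨by rintro _ ⟨n, rfl⟩; exact inf_le_left, fun u hu => ?_⟩
    obtain ⟨ψ, rfl⟩ := mk_surjective x
    obtain ⟨φ, rfl⟩ := mk_surjective u
    refine mk_le_mk.2 (.gld_box fun n => ?_)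
    have := hu ⟨n, rfl⟩
    rw [box_iterate_bot] at this
    exact this
  isGLB_sup_diaIter x := by
    refine ⟨by rintro _ ⟨n, rfl⟩; exact le_sup_left, fun u hu => ?_⟩
    obtain ⟨ψ, rfl⟩ := mk_surjective x
    obtain ⟨φ, rfl⟩ := mk_surjective u
    refine mk_le_mk.2 (.gld_dia fun n => ?_)
    have := hu ⟨n, rfl⟩
    rw [dia_iterate_top] at this
    exact this

/-- Under the canonical valuation sending a variable to its class, every formula evaluates to its
own class. -/
theorem eval_mk (φ : PosForm) : PosForm.eval box dia (fun p => mk (.var p)) φ = mk φ := by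
  induction φ with
  | var p => rfl
  | bot => rfl
  | top => rfl
  | or φ ψ hφ hψ => simp only [PosForm.eval, hφ, hψ]; rfl
  | and φ ψ hφ hψ => simp only [PosForm.eval, hφ, hψ]; rfl
  | dia φ hφ => simp only [PosForm.eval, hφ]; rfl
  | box φ hφ => simp only [PosForm.eval, hφ]; rfl

end Lindenbaum

/-- Soundness and completeness of `PGL⁺` with respect to the class of all
GLD-lattices: `φ ⊢ ψ` is provable iff `v(φ) ≤ v(ψ)` for every GLD-lattice and
every valuation. -/
theorem stmt13 (φ ψ : PosForm) :
    PGL φ ψ ↔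
    (∀ (A : Type) [DistribLattice A] [BoundedOrder A], ∀ box dia : A → A,
      IsGLDLattice box dia →
      ∀ v : ℕ → A, PosForm.eval box dia v φ ≤ PosForm.eval box dia v ψ) := by
  refine ⟨fun d A _ _ box dia h v => d.sound h v, fun H => ?_⟩
  have := H Lindenbaum Lindenbaum.box Lindenbaum.dia Lindenbaum.isGLDLattice
    (fun p => Lindenbaum.mk (.var p))
  rwa [Lindenbaum.eval_mk, Lindenbaum.eval_mk, Lindenbaum.mk_le_mk] at this
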